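/- Let τ ≥ 0. Let V be a complex Banach space and let A : ℝ → Matrix (Fin p) (Fin p) ℂ be bounded and continuous with every entry almost automorphic, with fundamental matrix Φ_A, and suppose y' = A(t)y has an α-exponential dichotomy with constants c, α > 0 whose projection P commutes with Φ_A(t) for every t. Let ρ > 0, let f : ℝ → (Fin p → V) be bounded, continuous and almost automorphic with sup_{t} ‖f(t)‖ ≤ αρ/(2c), and set φ₀(t) = ∫_ℝ G_A(t,s)·f(s) ds. Let g : ℝ × (Fin p → V) → (Fin p → V) be continuous with g(t,0) = 0 for all t, almost automorphic in t uniformly for y in compact sets, and suppose there is L > 0 with ‖g(t,y₁) − g(t,y₂)‖ ≤ L·‖y₁ − y₂‖ for all t ∈ ℝ and all y₁, y₂ at distance at most ρ from φ₀(t−τ). If 4cL < α, then there exists a unique almost automorphic differentiable y : ℝ → (Fin p → V) with sup_{t} ‖y(t) − φ₀(t)‖ ≤ ρ solving the delayed equation y'(t) = A(t)·y(t) + f(t) + g(t, y(t−τ)) for all t ∈ ℝ. -/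

import Mathlib

open MeasureTheory Filter Topology

attribute [local instance] Matrix.linftyOpNormedAddCommGroup Matrix.linftyOpNormedRing
  Matrix.linftyOpNormedAlgebra

/-- A continuous function `ψ : ℝ → V` into a Banach space is almost automorphic if for every
sequence of reals there is a subsequence `(τₙ)` and a function `ψ̃` with
`ψ(t+τₙ) → ψ̃(t)` and `ψ̃(t−τₙ) → ψ(t)` pointwise on `ℝ`. -/
def AlmostAutomorphic {V : Type*} [NormedAddCommGroup V] (ψ : ℝ → V) : Prop :=
  Continuous ψ ∧ ∀ σ : ℕ → ℝ, ∃ k : ℕ → ℕ, StrictMono k ∧ ∃ ψt : ℝ → V,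
    (∀ t : ℝ, Tendsto (fun n => ψ (t + σ (k n))) atTop (𝓝 (ψt t))) ∧
    (∀ t : ℝ, Tendsto (fun n => ψt (t - σ (k n))) atTop (𝓝 (ψ t)))

/-- `g(t,y)` is almost automorphic in `t` uniformly for `y` in compact subsets of `W`. -/
def AlmostAutomorphicUniform {W : Type*} [NormedAddCommGroup W] (g : ℝ → W → W) : Prop :=
  ∀ K : Set W, IsCompact K → ∀ σ : ℕ → ℝ, ∃ k : ℕ → ℕ, StrictMono k ∧ ∃ gt : ℝ → W → W,
    (∀ t : ℝ, TendstoUniformlyOn (fun n y => g (t + σ (k n)) y) (gt t) atTop K) ∧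
    (∀ t : ℝ, TendstoUniformlyOn (fun n y => gt (t - σ (k n)) y) (g t) atTop K)

/-- `Φ` is a fundamental matrix of `y' = A(t) y`: it is differentiable with
`Φ'(t) = A(t) Φ(t)` and `Φ(t)` invertible for every `t`. -/
def IsFundamentalMatrix {p : ℕ} (A Φ : ℝ → Matrix (Fin p) (Fin p) ℂ) : Prop :=
  (∀ t : ℝ, HasDerivAt Φ (A t * Φ t) t) ∧ ∀ t : ℝ, IsUnit (Φ t)

/-- The Green matrix associated with a projection `P` and a fundamental matrix `Φ`. -/
noncomputable def GreenMat {p : ℕ} (Φ : ℝ → Matrix (Fin p) (Fin p) ℂ)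
    (P : Matrix (Fin p) (Fin p) ℂ) (t s : ℝ) : Matrix (Fin p) (Fin p) ℂ :=
  if s ≤ t then Φ t * (Φ s)⁻¹ * P else -(Φ t * (Φ s)⁻¹ * (1 - P))

/-- The action of a complex `p × p` matrix on vectors with entries in a complex vector space. -/
def matSMulVec {V : Type*} [AddCommGroup V] [Module ℂ V] {p : ℕ}
    (M : Matrix (Fin p) (Fin p) ℂ) (v : Fin p → V) : Fin p → V :=
  fun i => ∑ j : Fin p, M i j • v j

/-- The bounded solution `φ₀` of the linear inhomogeneous equation, given by the Green matrix. -/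
noncomputable def greenSol {V : Type*} [NormedAddCommGroup V] [NormedSpace ℂ V]
    [CompleteSpace V] {p : ℕ} (Φ : ℝ → Matrix (Fin p) (Fin p) ℂ)
    (P : Matrix (Fin p) (Fin p) ℂ) (f : ℝ → (Fin p → V)) (t : ℝ) : Fin p → V :=
  ∫ s : ℝ, matSMulVec (GreenMat Φ P t s) (f s)

/-!
A bounded solution of `y' = A(t) y + h(t)` is unique, since the dichotomy forces both projections
of a bounded solution of `y' = A(t) y` to decay to zero, and it is given by `∫ G_A(t, s) h(s) ds`,
whose norm is at most `2c / α` times a bound for `h`. So the solutions of the delayed equation are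
the fixed points of the map sending `y` to the Green integral of `f + g(·, y(· - τ))`. On the
almost automorphic functions in the tube of radius `ρ` around `φ₀` this map contracts sup
distances by `2cL / α < 1/2`. The tube contains `0`, which is mapped to `φ₀` because
`g(t, 0) = 0`, and lies within distance `2ρ` of `0`; so the contraction estimate also shows that
the map preserves the tube.

That Green integrals preserve almost automorphy rests on Duhamel's formula: for translates of `A`
it bounds the difference of the Green kernels by `c²` times the integral of the difference of the
coefficients over the interval between `s` and `t`. By dominated convergence the kernel then
converges along `(t + τₙ, s + τₙ)` whenever `A` converges along `τₙ`, and returns along `-τₙ`; a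
second dominated convergence passes to the Green integral.
-/

section DiagonalExtraction

theorem exists_strictMono_forall {α ι : Type*} [Countable ι] {p : ι → (ℕ → α) → Prop}
    (hex : ∀ i u, ∃ k : ℕ → ℕ, StrictMono k ∧ p i (u ∘ k))
    (hsub : ∀ i u v (m : ℕ → ℕ), Tendsto m atTop atTop → v =ᶠ[atTop] u ∘ m → p i u → p i v)
    (u : ℕ → α) : ∃ k : ℕ → ℕ, StrictMono k ∧ ∀ i, p i (u ∘ k) := by
  cases isEmpty_or_nonempty ι with
  | inl _ => exact ⟨id, strictMono_id, isEmptyElim⟩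
  | inr _ =>
  obtain ⟨e, he⟩ := exists_surjective_nat ι
  choose k hk hp using hex
  let K : ℕ → ℕ → ℕ := fun N => Nat.rec id (fun N φ => φ ∘ k (e N) (u ∘ φ)) N
  have hK_mono (N : ℕ) : StrictMono (K N) := by
    induction N with
    | zero => exact strictMono_id
    | succ N ih => exact ih.comp (hk _ _)
  have hK_subseq (N d : ℕ) : ∃ m : ℕ → ℕ, StrictMono m ∧ K (N + d) = K N ∘ m := by
    induction d with
    | zero => exact ⟨id, strictMono_id, rfl⟩
    | succ d ih =>
      obtain ⟨m, hm, hKm⟩ := ih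
      exact ⟨m ∘ k (e (N + d)) (u ∘ K (N + d)), hm.comp (hk _ _),
        congrArg (· ∘ k (e (N + d)) (u ∘ K (N + d))) hKm⟩
  refine ⟨fun n => K n n, strictMono_nat_of_lt_succ fun n => hK_mono n <|
    (Nat.lt_succ_self n).trans_le ((hk (e n) (u ∘ K n)).id_le _), he.forall.2 fun N => ?_⟩
  have hdiag (n : ℕ) : ∃ m, n ≤ m ∧ (N + 1 ≤ n → K n n = K (N + 1) m) := by
    by_cases hn : N + 1 ≤ n
    · obtain ⟨d, rfl⟩ := Nat.exists_eq_add_of_le hn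
      obtain ⟨m, hm, hKm⟩ := hK_subseq (N + 1) d
      exact ⟨m (N + 1 + d), hm.id_le _, fun _ => congrFun hKm _⟩
    · exact ⟨n, le_rfl, fun h => absurd h hn⟩
  choose m hm hKm using hdiag
  refine hsub _ (u ∘ K (N + 1)) _ m (tendsto_atTop_mono hm tendsto_id) ?_ (hp (e N) (u ∘ K N))
  filter_upwards [eventually_ge_atTop (N + 1)] with n hn
  exact congrArg u (hKm n hn)

end DiagonalExtraction

section AlmostAutomorphicFunctions

/-- The translates of `ψ` along `σ` converge pointwise to `ψ'`. -/
def TendstoAlongTranslates {X : Type*} [TopologicalSpace X] (ψ : ℝ → X) (σ : ℕ → ℝ)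
    (ψ' : ℝ → X) : Prop :=
  ∀ t, Tendsto (fun n => ψ (t + σ n)) atTop (𝓝 (ψ' t))

/-- The convergence required of the subsequence `σ` in the definition of almost automorphy, with
`ψ'` playing the role of `ψ̃`. -/
def AutomorphicAlong {X : Type*} [TopologicalSpace X] (ψ : ℝ → X) (σ : ℕ → ℝ)
    (ψ' : ℝ → X) : Prop :=
  TendstoAlongTranslates ψ σ ψ' ∧ TendstoAlongTranslates ψ' (-σ) ψ

section TopologicalSpace

variable {X Y : Type*} [TopologicalSpace X] [TopologicalSpace Y] {ψ ψ' : ℝ → X} {σ : ℕ → ℝ}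

theorem TendstoAlongTranslates.mem_closure_range (h : TendstoAlongTranslates ψ σ ψ') (t : ℝ) :
    ψ' t ∈ closure (Set.range ψ) :=
  mem_closure_of_tendsto (h t) (Eventually.of_forall fun _ => Set.mem_range_self _)

theorem TendstoAlongTranslates.subseq (h : TendstoAlongTranslates ψ σ ψ') {ς : ℕ → ℝ} {m : ℕ → ℕ}
    (hm : Tendsto m atTop atTop) (hς : ς =ᶠ[atTop] σ ∘ m) : TendstoAlongTranslates ψ ς ψ' :=
  fun t => ((h t).comp hm).congr' (hς.mono fun n hn => by simp only [Function.comp_apply, hn])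

theorem AutomorphicAlong.subseq (h : AutomorphicAlong ψ σ ψ') {ς : ℕ → ℝ} {m : ℕ → ℕ}
    (hm : Tendsto m atTop atTop) (hς : ς =ᶠ[atTop] σ ∘ m) : AutomorphicAlong ψ ς ψ' :=
  ⟨h.1.subseq hm hς, h.2.subseq hm hς.neg⟩

theorem AutomorphicAlong.prodMk {χ χ' : ℝ → Y} (h : AutomorphicAlong ψ σ ψ')
    (h' : AutomorphicAlong χ σ χ') :
    AutomorphicAlong (fun t => (ψ t, χ t)) σ fun t => (ψ' t, χ' t) :=
  ⟨fun t => (h.1 t).prodMk_nhds (h'.1 t), fun t => (h.2 t).prodMk_nhds (h'.2 t)⟩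

theorem AutomorphicAlong.continuous_comp {F : X → Y} (hF : Continuous F)
    (h : AutomorphicAlong ψ σ ψ') : AutomorphicAlong (F ∘ ψ) σ (F ∘ ψ') :=
  ⟨fun t => (hF.tendsto _).comp (h.1 t), fun t => (hF.tendsto _).comp (h.2 t)⟩

end TopologicalSpace

variable {V W : Type*} [NormedAddCommGroup V] [NormedAddCommGroup W]

theorem almostAutomorphic_iff {ψ : ℝ → V} :
    AlmostAutomorphic ψ ↔ Continuous ψ ∧ ∀ σ : ℕ → ℝ, ∃ k : ℕ → ℕ, StrictMono k ∧
      ∃ ψ' : ℝ → V, AutomorphicAlong ψ (σ ∘ k) ψ' := by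
  simp only [AlmostAutomorphic, AutomorphicAlong, TendstoAlongTranslates, Function.comp_apply,
    Pi.neg_apply, sub_eq_add_neg]

namespace AlmostAutomorphic

theorem continuous {ψ : ℝ → V} (h : AlmostAutomorphic ψ) : Continuous ψ := h.1

theorem zero : AlmostAutomorphic (0 : ℝ → V) :=
  ⟨continuous_const, fun _ =>
    ⟨id, strictMono_id, 0, fun _ => tendsto_const_nhds, fun _ => tendsto_const_nhds⟩⟩

theorem exists_automorphicAlong {ψ : ℝ → V} (h : AlmostAutomorphic ψ) (σ : ℕ → ℝ) :
    ∃ k : ℕ → ℕ, StrictMono k ∧ ∃ ψ' : ℝ → V, AutomorphicAlong ψ (σ ∘ k) ψ' :=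
  (almostAutomorphic_iff.1 h).2 σ

theorem exists_automorphicAlong_forall {ι : Type*} [Countable ι] {E : ι → Type*}
    [∀ i, NormedAddCommGroup (E i)] {ψ : ∀ i, ℝ → E i} (h : ∀ i, AlmostAutomorphic (ψ i))
    (σ : ℕ → ℝ) : ∃ k : ℕ → ℕ, StrictMono k ∧ ∃ ψ' : ∀ i, ℝ → E i,
      ∀ i, AutomorphicAlong (ψ i) (σ ∘ k) (ψ' i) := by
  obtain ⟨k, hk, hex⟩ := exists_strictMono_forall
    (p := fun i σ => ∃ ψ' : ℝ → E i, AutomorphicAlong (ψ i) σ ψ')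
    (fun i => (h i).exists_automorphicAlong)
    (fun _ _ _ _ hm hς ⟨ψ', hψ'⟩ => ⟨ψ', hψ'.subseq hm hς⟩) σ
  choose ψ' hψ' using hex
  exact ⟨k, hk, ψ', hψ'⟩

theorem prodMk {ψ : ℝ → V} {χ : ℝ → W} (hψ : AlmostAutomorphic ψ) (hχ : AlmostAutomorphic χ) :
    AlmostAutomorphic fun t => (ψ t, χ t) := by
  refine almostAutomorphic_iff.2 ⟨hψ.continuous.prodMk hχ.continuous, fun σ => ?_⟩
  obtain ⟨k, hk, ψ', hψ'⟩ := hψ.exists_automorphicAlong σ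
  obtain ⟨l, hl, χ', hχ'⟩ := hχ.exists_automorphicAlong (σ ∘ k)
  exact ⟨k ∘ l, hk.comp hl, _, (hψ'.subseq hl.tendsto_atTop .rfl).prodMk hχ'⟩

theorem pi {ι : Type*} [Fintype ι] {E : ι → Type*} [∀ i, NormedAddCommGroup (E i)]
    {ψ : ℝ → ∀ i, E i} (h : ∀ i, AlmostAutomorphic fun t => ψ t i) : AlmostAutomorphic ψ := by
  refine almostAutomorphic_iff.2 ⟨continuous_pi fun i => (h i).continuous, fun σ => ?_⟩
  obtain ⟨k, hk, ψ', hψ'⟩ := exists_automorphicAlong_forall h σ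
  exact ⟨k, hk, fun t i => ψ' i t, fun t => tendsto_pi_nhds.2 fun i => (hψ' i).1 t,
    fun t => tendsto_pi_nhds.2 fun i => (hψ' i).2 t⟩

theorem continuous_comp {F : V → W} (hF : Continuous F) {ψ : ℝ → V} (h : AlmostAutomorphic ψ) :
    AlmostAutomorphic (F ∘ ψ) := by
  refine almostAutomorphic_iff.2 ⟨hF.comp h.continuous, fun σ => ?_⟩
  obtain ⟨k, hk, ψ', hψ'⟩ := h.exists_automorphicAlong σ
  exact ⟨k, hk, F ∘ ψ', hψ'.continuous_comp hF⟩

theorem add {ψ χ : ℝ → V} (hψ : AlmostAutomorphic ψ) (hχ : AlmostAutomorphic χ) :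
    AlmostAutomorphic fun t => ψ t + χ t :=
  (hψ.prodMk hχ).continuous_comp (F := fun p : V × V => p.1 + p.2) continuous_add

theorem comp_sub_const {ψ : ℝ → V} (h : AlmostAutomorphic ψ) (a : ℝ) :
    AlmostAutomorphic fun t => ψ (t - a) := by
  refine almostAutomorphic_iff.2 ⟨h.continuous.comp (continuous_sub_right a), fun σ => ?_⟩
  obtain ⟨k, hk, ψ', hψ'⟩ := h.exists_automorphicAlong σ
  refine ⟨k, hk, fun t => ψ' (t - a), fun t => ?_, fun t => ?_⟩
  · simpa only [sub_add_eq_add_sub] using hψ'.1 (t - a)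
  · simpa only [sub_add_eq_add_sub] using hψ'.2 (t - a)

theorem isCompact_closure_range {ψ : ℝ → V} (h : AlmostAutomorphic ψ) :
    IsCompact (closure (Set.range ψ)) := by
  refine IsSeqCompact.isCompact fun x hx => ?_
  have hclose (n : ℕ) : ∃ s : ℝ, dist (x n) (ψ s) < 1 / ((n : ℝ) + 1) := by
    obtain ⟨_, ⟨s, rfl⟩, hs⟩ := Metric.mem_closure_iff.1 (hx n) _ Nat.one_div_pos_of_nat
    exact ⟨s, hs⟩
  choose σ hσ using hclose
  obtain ⟨k, hk, ψ', hψ', -⟩ := h.exists_automorphicAlong σ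
  have hlim : Tendsto (fun n => ψ (σ (k n))) atTop (𝓝 (ψ' 0)) := by
    simpa only [zero_add, Function.comp_apply] using hψ' 0
  have hdist : Tendsto (fun n => dist (x (k n)) (ψ (σ (k n)))) atTop (𝓝 0) :=
    squeeze_zero (fun _ => dist_nonneg) (fun n => (hσ (k n)).le)
      (tendsto_one_div_add_atTop_nhds_zero_nat.comp hk.tendsto_atTop)
  exact ⟨ψ' 0, hψ'.mem_closure_range 0, k, hk, (tendsto_iff_of_dist hdist).2 hlim⟩

theorem exists_norm_le {ψ : ℝ → V} (h : AlmostAutomorphic ψ) : ∃ C, ∀ t, ‖ψ t‖ ≤ C := by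
  obtain ⟨C, hC⟩ := h.isCompact_closure_range.isBounded.exists_norm_le
  exact ⟨C, fun t => hC _ (subset_closure (Set.mem_range_self t))⟩

end AlmostAutomorphic

theorem AlmostAutomorphicUniform.comp {g : ℝ → V → V}
    (hgc : Continuous fun q : ℝ × V => g q.1 q.2) (hg : AlmostAutomorphicUniform g) {y : ℝ → V}
    (hy : AlmostAutomorphic y) : AlmostAutomorphic fun t => g t (y t) := by
  refine almostAutomorphic_iff.2 ⟨hgc.comp (continuous_id.prodMk hy.continuous), fun σ => ?_⟩
  have hgt (t : ℝ) : Continuous (g t) := hgc.comp (Continuous.prodMk_right t)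
  obtain ⟨k, hk, y', hy'⟩ := hy.exists_automorphicAlong σ
  obtain ⟨l, hl, g', hg', hg''⟩ := hg _ hy.isCompact_closure_range (σ ∘ k)
  replace hy' := hy'.subseq hl.tendsto_atTop .rfl
  refine ⟨k ∘ l, hk.comp hl, fun t => g' t (y' t), fun t => ?_, fun t => ?_⟩
  · have hcont : ContinuousOn (g' t) (closure (Set.range y)) :=
      (hg' t).continuousOn (Frequently.of_forall fun _ => (hgt _).continuousOn)
    exact (hg' t).tendsto_comp (hcont _ (hy'.1.mem_closure_range t))
      (tendsto_nhdsWithin_iff.2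
        ⟨hy'.1 t, Eventually.of_forall fun _ => subset_closure (Set.mem_range_self _)⟩)
  · simp only [sub_eq_add_neg] at hg''
    exact (hg'' t).tendsto_comp (hgt t).continuousWithinAt
      (tendsto_nhdsWithin_iff.2
        ⟨hy'.2 t, Eventually.of_forall fun _ => hy'.1.mem_closure_range _⟩)

theorem TendstoAlongTranslates.uniformCauchySeqOn {ψ ψ' : ℕ → ℝ → V} {σ : ℕ → ℝ}
    (hψ : UniformCauchySeqOn ψ atTop Set.univ)
    (h : ∀ N, TendstoAlongTranslates (ψ N) σ (ψ' N)) :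
    UniformCauchySeqOn ψ' atTop Set.univ := by
  rw [Metric.uniformCauchySeqOn_iff] at hψ ⊢
  intro ε hε
  obtain ⟨N₀, hN₀⟩ := hψ (ε / 2) (half_pos hε)
  refine ⟨N₀, fun M hM N hN t _ => (half_lt_self hε).trans_le' ?_⟩
  exact le_of_tendsto ((h M t).dist (h N t))
    (Eventually.of_forall fun n => (hN₀ M hM N hN _ (Set.mem_univ _)).le)

theorem TendstoAlongTranslates.of_tendstoUniformly {ψ ψ' : ℕ → ℝ → V} {y y' : ℝ → V} {σ : ℕ → ℝ}
    (hψ : TendstoUniformly ψ y atTop) (hψ' : ∀ t, Tendsto (ψ' · t) atTop (𝓝 (y' t)))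
    (h : ∀ N, TendstoAlongTranslates (ψ N) σ (ψ' N)) : TendstoAlongTranslates y σ y' :=
  fun t => (hψ.comp fun n => t + σ n).tendsto_of_eventually_tendsto
    (Eventually.of_forall fun N => h N t) (hψ' t)

theorem AlmostAutomorphic.of_tendstoUniformly [CompleteSpace V] {ψ : ℕ → ℝ → V} {y : ℝ → V}
    (h : ∀ N, AlmostAutomorphic (ψ N)) (hy : TendstoUniformly ψ y atTop) :
    AlmostAutomorphic y := by
  refine almostAutomorphic_iff.2
    ⟨hy.continuous (Frequently.of_forall fun N => (h N).continuous), fun σ => ?_⟩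
  obtain ⟨k, hk, ψ', hψ'⟩ := exists_automorphicAlong_forall h σ
  have hcauchy : UniformCauchySeqOn ψ' atTop Set.univ :=
    TendstoAlongTranslates.uniformCauchySeqOn
      (tendstoUniformlyOn_univ.2 hy).uniformCauchySeqOn fun N => (hψ' N).1
  choose y' hy' using fun t =>
    cauchySeq_tendsto_of_complete (hcauchy.cauchySeq (Set.mem_univ t))
  have huniform : TendstoUniformly ψ' y' atTop := tendstoUniformlyOn_univ.1 <|
    hcauchy.tendstoUniformlyOn_of_tendsto fun t _ => hy' t
  exact ⟨k, hk, y', .of_tendstoUniformly hy hy' fun N => (hψ' N).1,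
    .of_tendstoUniformly huniform hy.tendsto_at fun N => (hψ' N).2⟩

end AlmostAutomorphicFunctions

section ImproperIntegrals

variable {E : Type*} [NormedAddCommGroup E] [NormedSpace ℝ E] [CompleteSpace E] {u : ℝ → E}

theorem hasDerivAt_setIntegral_Iic (hu : Continuous u) (hi : ∀ t, IntegrableOn u (Set.Iic t))
    (t : ℝ) : HasDerivAt (fun t => ∫ s in Set.Iic t, u s) (u t) t := by
  have hsplit (r : ℝ) :
      ∫ s in Set.Iic r, u s = (∫ s in t..r, u s) + ∫ s in Set.Iic t, u s := by
    rw [← intervalIntegral.integral_Iic_sub_Iic (hi t) (hi r), sub_add_cancel]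
  rw [funext hsplit]
  exact (hu.integral_hasStrictDerivAt t t).hasDerivAt.add_const _

theorem hasDerivAt_setIntegral_Ioi (hu : Continuous u) (hi : ∀ t, IntegrableOn u (Set.Ioi t))
    (t : ℝ) : HasDerivAt (fun t => ∫ s in Set.Ioi t, u s) (-u t) t := by
  have hsplit (r : ℝ) :
      ∫ s in Set.Ioi r, u s = (∫ s in Set.Ioi t, u s) - ∫ s in t..r, u s := by
    rw [← intervalIntegral.integral_interval_add_Ioi (hi t) (hi r), add_sub_cancel_left]
  rw [funext hsplit]
  exact (hu.integral_hasStrictDerivAt t t).hasDerivAt.const_sub _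

end ImproperIntegrals

section ExponentialKernel

variable {α : ℝ}

theorem integrable_exp_neg_mul_abs (hα : 0 < α) :
    Integrable fun s : ℝ => Real.exp (-α * |s|) := by
  rw [← integrableOn_univ, ← Set.Iic_union_Ioi (a := (0 : ℝ)), integrableOn_union]
  constructor
  · refine (integrableOn_exp_mul_Iic hα 0).congr_fun (fun s hs => ?_) measurableSet_Iic
    simp only [abs_of_nonpos (Set.mem_Iic.1 hs), neg_mul_neg]
  · refine (integrableOn_exp_mul_Ioi (neg_lt_zero.2 hα) 0).congr_fun (fun s hs => ?_)
      measurableSet_Ioi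
    simp only [abs_of_pos (Set.mem_Ioi.1 hs)]

theorem integral_exp_neg_mul_abs (hα : 0 < α) : ∫ s : ℝ, Real.exp (-α * |s|) = 2 / α := by
  rw [integral_comp_abs (f := fun s => Real.exp (-α * s)),
    integral_exp_mul_Ioi (neg_lt_zero.2 hα), mul_zero, Real.exp_zero, neg_div_neg_eq,
    mul_one_div]

theorem eq_zero_of_norm_le_mul_exp {E : Type*} [NormedAddCommGroup E] {x : E} {C : ℝ}
    (hα : 0 < α) (hx : ∀ r > 0, ‖x‖ ≤ C * Real.exp (-α * r)) : x = 0 := by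
  have hexp : Tendsto (fun r => C * Real.exp (-α * r)) atTop (𝓝 (C * 0)) :=
    (Real.tendsto_exp_atBot.comp
      (tendsto_id.const_mul_atTop_of_neg (neg_lt_zero.2 hα))).const_mul C
  rw [mul_zero] at hexp
  exact norm_le_zero_iff.1 (ge_of_tendsto hexp ((eventually_gt_atTop 0).mono hx))

end ExponentialKernel

section TranslatesOfIntegrals

variable {E : Type*} [NormedAddCommGroup E]

/-- The translates of the kernel `K` along the diagonal sequence `(σₙ, σₙ)` converge pointwise
to `K'`. -/
def TendstoAlongDiagTranslates {X : Type*} [TopologicalSpace X] (K : ℝ → ℝ → X) (σ : ℕ → ℝ)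
    (K' : ℝ → ℝ → X) : Prop :=
  ∀ t s, Tendsto (fun n => K (t + σ n) (s + σ n)) atTop (𝓝 (K' t s))

variable {F F' : ℝ → ℝ → E} {b : ℝ → ℝ} {σ : ℕ → ℝ}

namespace TendstoAlongDiagTranslates

theorem norm_le (h : TendstoAlongDiagTranslates F σ F') (hF : ∀ t s, ‖F t s‖ ≤ b (t - s))
    (t s : ℝ) : ‖F' t s‖ ≤ b (t - s) := by
  refine le_of_tendsto (h t s).norm (Eventually.of_forall fun n => ?_)
  simpa only [add_sub_add_right_eq_sub] using hF (t + σ n) (s + σ n)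

theorem aestronglyMeasurable (h : TendstoAlongDiagTranslates F σ F')
    (hF : ∀ t, AEStronglyMeasurable (F t)) (t : ℝ) : AEStronglyMeasurable (F' t) :=
  aestronglyMeasurable_of_tendsto_ae atTop
    (fun n => (hF (t + σ n)).comp_measurePreserving (measurePreserving_add_right volume (σ n)))
    (Eventually.of_forall (h t))

theorem integral [NormedSpace ℝ E] (h : TendstoAlongDiagTranslates F σ F') (hb : Integrable b)
    (hFm : ∀ t, AEStronglyMeasurable (F t)) (hF : ∀ t s, ‖F t s‖ ≤ b (t - s)) :
    TendstoAlongTranslates (fun t => ∫ s, F t s) σ fun t => ∫ s, F' t s := by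
  intro t
  have hlim : Tendsto (fun n => ∫ s, F (t + σ n) (s + σ n)) atTop (𝓝 (∫ s, F' t s)) :=
    tendsto_integral_of_dominated_convergence (fun s => b (t - s))
      (fun n => (hFm (t + σ n)).comp_measurePreserving
        (measurePreserving_add_right volume (σ n)))
      (hb.comp_sub_left t)
      (fun n => Eventually.of_forall fun s => by
        simpa only [add_sub_add_right_eq_sub] using hF (t + σ n) (s + σ n))
      (Eventually.of_forall (h t))
  exact hlim.congr fun n => integral_add_right_eq_self (F (t + σ n)) (σ n)

end TendstoAlongDiagTranslates

theorem automorphicAlong_integral [NormedSpace ℝ E] (hF' : TendstoAlongDiagTranslates F σ F')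
    (hF : TendstoAlongDiagTranslates F' (-σ) F) (hb : Integrable b)
    (hFm : ∀ t, AEStronglyMeasurable (F t)) (hFb : ∀ t s, ‖F t s‖ ≤ b (t - s)) :
    AutomorphicAlong (fun t => ∫ s, F t s) σ fun t => ∫ s, F' t s :=
  ⟨hF'.integral hb hFm hFb, hF.integral hb (hF'.aestronglyMeasurable hFm) (hF'.norm_le hFb)⟩

theorem tendsto_abs_intervalIntegral_norm {ι : Type*} {l : Filter ι} [l.IsCountablyGenerated]
    {B : ι → ℝ → E} {B' : ℝ → E} {C : ℝ}
    (hBm : ∀ i, AEStronglyMeasurable (B i)) (hBC : ∀ i r, ‖B i r‖ ≤ C)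
    (hB : ∀ r, Tendsto (B · r) l (𝓝 (B' r))) (s t : ℝ) :
    Tendsto (fun i => |∫ r in s..t, ‖B i r‖|) l (𝓝 |∫ r in s..t, ‖B' r‖|) := by
  refine (intervalIntegral.tendsto_integral_filter_of_dominated_convergence (fun _ => C)
    (Eventually.of_forall fun i => (hBm i).norm.restrict)
    (Eventually.of_forall fun i => Eventually.of_forall fun r _ => ?_)
    intervalIntegrable_const (Eventually.of_forall fun r _ => (hB r).norm)).abs
  simpa only [norm_norm] using hBC i r

end TranslatesOfIntegrals

section ExponentialDichotomy

variable {R : Type*} [NormedRing R]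

/-- The Green kernel `G_A(t, s)` of `y' = A(t) y` attached to a projection `P`, for a fundamental
solution `Φ` with values in the units of a ring. -/
noncomputable def greenKernel (Φ : ℝ → Rˣ) (P : R) (t s : ℝ) : R :=
  if s ≤ t then Φ t * ↑(Φ s)⁻¹ * P else -(Φ t * ↑(Φ s)⁻¹ * (1 - P))

/-- The candidate bounded solution `∫ G_A(t, s) h(s) ds` of `y' = A(t) y + h(t)`. -/
noncomputable def greenIntegral {E : Type*} [NormedAddCommGroup E] [NormedSpace ℝ E] [Module R E]
    (Φ : ℝ → Rˣ) (P : R) (h : ℝ → E) (t : ℝ) : E :=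
  ∫ s, greenKernel Φ P t s • h s

/-- `y' = A(t) y` has an `α`-exponential dichotomy with constant `c`, fundamental solution `Φ`
and projection `P` commuting with `Φ`. The coefficients take values in a Banach algebra, which
for systems of scalar equations is the algebra of matrices. -/
structure HasExpDichotomy [NormedAlgebra ℝ R] (A : ℝ → R) (Φ : ℝ → Rˣ) (P : R) (c α : ℝ) :
    Prop where
  hasDerivAt : ∀ t, HasDerivAt (fun s => (Φ s : R)) (A t * Φ t) t
  isIdempotentElem : IsIdempotentElem P
  commute : ∀ t, Commute (Φ t : R) P
  c_pos : 0 < c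
  α_pos : 0 < α
  norm_greenKernel_le : ∀ t s, ‖greenKernel Φ P t s‖ ≤ c * Real.exp (-α * |t - s|)

theorem hasDerivAt_units_inv [NormedAlgebra ℝ R] [CompleteSpace R] {Φ : ℝ → Rˣ}
    {Φ' : R} {t : ℝ} (h : HasDerivAt (fun s => (Φ s : R)) Φ' t) :
    HasDerivAt (fun s => (↑(Φ s)⁻¹ : R)) (-(↑(Φ t)⁻¹ * Φ' * ↑(Φ t)⁻¹)) t := by
  have hinv := (hasFDerivAt_ringInverse (𝕜 := ℝ) (Φ t)).comp_hasDerivAt t h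
  simpa only [Function.comp_def, Ring.inverse_unit, neg_apply,
    ContinuousLinearMap.mulLeftRight_apply] using hinv

theorem greenKernel_of_le (Φ : ℝ → Rˣ) (P : R) {t s : ℝ} (h : s ≤ t) :
    greenKernel Φ P t s = Φ t * ↑(Φ s)⁻¹ * P :=
  if_pos h

theorem greenKernel_of_lt (Φ : ℝ → Rˣ) (P : R) {t s : ℝ} (h : t < s) :
    greenKernel Φ P t s = -(Φ t * ↑(Φ s)⁻¹ * (1 - P)) :=
  if_neg h.not_ge

variable [NormedAlgebra ℝ R]

namespace HasExpDichotomy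

variable {A : ℝ → R} {Φ : ℝ → Rˣ} {P : R} {c α : ℝ}

theorem continuous (D : HasExpDichotomy A Φ P c α) : Continuous fun t => (Φ t : R) :=
  continuous_iff_continuousAt.2 fun t => (D.hasDerivAt t).continuousAt

theorem commute_mul_inv (D : HasExpDichotomy A Φ P c α) (t s : ℝ) :
    Commute (Φ t * ↑(Φ s)⁻¹ : R) P :=
  (D.commute t).mul_left (D.commute s).units_inv_left

theorem norm_greenKernel_le_const (D : HasExpDichotomy A Φ P c α) (t s : ℝ) :
    ‖greenKernel Φ P t s‖ ≤ c :=
  (D.norm_greenKernel_le t s).trans <| mul_le_of_le_one_right D.c_pos.le <|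
    Real.exp_le_one_iff.2 <| mul_nonpos_of_nonpos_of_nonneg (neg_nonpos.2 D.α_pos.le) (abs_nonneg _)

theorem comp_add_const (D : HasExpDichotomy A Φ P c α) (a : ℝ) :
    HasExpDichotomy (fun t => A (t + a)) (fun t => Φ (t + a)) P c α where
  hasDerivAt t := (D.hasDerivAt (t + a)).comp_add_const t a
  isIdempotentElem := D.isIdempotentElem
  commute t := D.commute (t + a)
  c_pos := D.c_pos
  α_pos := D.α_pos
  norm_greenKernel_le t s := by
    simpa only [greenKernel, add_le_add_iff_right, add_sub_add_right_eq_sub]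
      using D.norm_greenKernel_le (t + a) (s + a)

section GreenIntegralBound

variable {E : Type*} [NormedAddCommGroup E] [Module R E] [IsBoundedSMul R E] {h : ℝ → E} {H : ℝ}

theorem norm_greenKernel_smul_le (D : HasExpDichotomy A Φ P c α) (hH : ∀ t, ‖h t‖ ≤ H)
    (t s : ℝ) : ‖greenKernel Φ P t s • h s‖ ≤ c * H * Real.exp (-α * |t - s|) :=
  calc ‖greenKernel Φ P t s • h s‖
      ≤ ‖greenKernel Φ P t s‖ * ‖h s‖ := norm_smul_le _ _
    _ ≤ c * Real.exp (-α * |t - s|) * H :=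
      mul_le_mul (D.norm_greenKernel_le t s) (hH s) (norm_nonneg _)
        (mul_nonneg D.c_pos.le (Real.exp_pos _).le)
    _ = c * H * Real.exp (-α * |t - s|) := mul_right_comm _ _ _

theorem integrable_norm_bound (D : HasExpDichotomy A Φ P c α) (H t : ℝ) :
    Integrable fun s => c * H * Real.exp (-α * |t - s|) :=
  ((integrable_exp_neg_mul_abs D.α_pos).comp_sub_left t).const_mul (c * H)

theorem norm_greenIntegral_le [NormedSpace ℝ E] (D : HasExpDichotomy A Φ P c α)
    (hH : ∀ t, ‖h t‖ ≤ H) (t : ℝ) : ‖greenIntegral Φ P h t‖ ≤ 2 * c / α * H :=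
  calc ‖greenIntegral Φ P h t‖
      ≤ ∫ s, c * H * Real.exp (-α * |t - s|) :=
        norm_integral_le_of_norm_le (D.integrable_norm_bound H t)
          (Eventually.of_forall (D.norm_greenKernel_smul_le hH t))
    _ = 2 * c / α * H := by
        rw [integral_const_mul,
          integral_sub_left_eq_self (fun s : ℝ => Real.exp (-α * |s|)) volume t,
          integral_exp_neg_mul_abs D.α_pos]
        ring

end GreenIntegralBound

variable [CompleteSpace R]

theorem hasDerivAt_inv (D : HasExpDichotomy A Φ P c α) (t : ℝ) :
    HasDerivAt (fun s => (↑(Φ s)⁻¹ : R)) (-(↑(Φ t)⁻¹ * A t)) t := by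
  simpa only [mul_assoc, Units.mul_inv, mul_one] using hasDerivAt_units_inv (D.hasDerivAt t)

theorem continuous_inv (D : HasExpDichotomy A Φ P c α) : Continuous fun t => (↑(Φ t)⁻¹ : R) :=
  continuous_iff_continuousAt.2 fun t => (D.hasDerivAt_inv t).continuousAt

section Perturbation

variable {A₁ A₂ : ℝ → R} {Φ₁ Φ₂ : ℝ → Rˣ} {c₁ c₂ α₁ α₂ : ℝ} {Q : R}

-- Duhamel's formula. Placing `Q` on both sides leaves a copy next to each propagator, so that
-- only propagators on the range of `Q` have to be estimated.
theorem propagator_sub_eq_integral (D₁ : HasExpDichotomy A₁ Φ₁ P c₁ α₁)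
    (D₂ : HasExpDichotomy A₂ Φ₂ P c₂ α₂) (hA₁ : Continuous A₁) (hA₂ : Continuous A₂)
    (hQ : IsIdempotentElem Q) (hQ₁ : ∀ t, Commute (Φ₁ t : R) Q)
    (hQ₂ : ∀ t, Commute (Φ₂ t : R) Q) (t s : ℝ) :
    Φ₂ t * ↑(Φ₂ s)⁻¹ * Q - Φ₁ t * ↑(Φ₁ s)⁻¹ * Q =
      ∫ r in s..t, Φ₁ t * ↑(Φ₁ r)⁻¹ * Q * (A₂ r - A₁ r) * (Φ₂ r * ↑(Φ₂ s)⁻¹ * Q) := by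
  have hcomm (r : ℝ) : Q * (Φ₁ t * ↑(Φ₁ r)⁻¹) = Φ₁ t * ↑(Φ₁ r)⁻¹ * Q :=
    ((hQ₁ t).mul_left (hQ₁ r).units_inv_left).eq.symm
  have hcomm₂ : Q * (Φ₂ t * ↑(Φ₂ s)⁻¹) = Φ₂ t * ↑(Φ₂ s)⁻¹ * Q :=
    ((hQ₂ t).mul_left (hQ₂ s).units_inv_left).eq.symm
  have hderiv (r : ℝ) :
      HasDerivAt (fun r => Q * (Φ₁ t * ↑(Φ₁ r)⁻¹) * (Φ₂ r * ↑(Φ₂ s)⁻¹ * Q))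
        (Φ₁ t * ↑(Φ₁ r)⁻¹ * Q * (A₂ r - A₁ r) * (Φ₂ r * ↑(Φ₂ s)⁻¹ * Q)) r := by
    refine ((((D₁.hasDerivAt_inv r).const_mul _).const_mul Q).mul
      (((D₂.hasDerivAt r).mul_const _).mul_const Q)).congr_deriv ?_
    rw [← hcomm r]
    noncomm_ring
  have hcont : Continuous fun r =>
      Φ₁ t * ↑(Φ₁ r)⁻¹ * Q * (A₂ r - A₁ r) * (Φ₂ r * ↑(Φ₂ s)⁻¹ * Q) :=
    (((continuous_const.mul D₁.continuous_inv).mul_const Q).mul (hA₂.sub hA₁)).mul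
      ((D₂.continuous.mul_const _).mul_const Q)
  rw [intervalIntegral.integral_eq_sub_of_hasDerivAt (fun r _ => hderiv r)
    (hcont.intervalIntegrable s t), Units.mul_inv, Units.mul_inv, mul_one, one_mul, ← mul_assoc,
    hcomm₂, hcomm s, mul_assoc _ Q Q, mul_assoc _ Q Q, hQ.eq]

theorem norm_propagator_sub_le (D₁ : HasExpDichotomy A₁ Φ₁ P c₁ α₁)
    (D₂ : HasExpDichotomy A₂ Φ₂ P c₂ α₂) (hA₁ : Continuous A₁) (hA₂ : Continuous A₂)
    (hQ : IsIdempotentElem Q) (hQ₁ : ∀ t, Commute (Φ₁ t : R) Q)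
    (hQ₂ : ∀ t, Commute (Φ₂ t : R) Q) {t s : ℝ}
    (hb₁ : ∀ r ∈ Set.uIoc s t, r ≠ s → ‖(Φ₁ t * ↑(Φ₁ r)⁻¹ * Q : R)‖ ≤ c₁)
    (hb₂ : ∀ r ∈ Set.uIoc s t, r ≠ s → ‖(Φ₂ r * ↑(Φ₂ s)⁻¹ * Q : R)‖ ≤ c₂) :
    ‖(Φ₂ t * ↑(Φ₂ s)⁻¹ * Q - Φ₁ t * ↑(Φ₁ s)⁻¹ * Q : R)‖ ≤
      c₁ * c₂ * |∫ r in s..t, ‖A₂ r - A₁ r‖| := by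
  rw [propagator_sub_eq_integral D₁ D₂ hA₁ hA₂ hQ hQ₁ hQ₂,
    ← abs_of_pos (mul_pos D₁.c_pos D₂.c_pos), ← abs_mul, ← intervalIntegral.integral_const_mul]
  refine intervalIntegral.norm_integral_le_abs_of_norm_le ?_
    (((hA₂.sub hA₁).norm.const_mul _).intervalIntegrable s t)
  filter_upwards [ae_restrict_mem measurableSet_uIoc, ae_restrict_of_ae (volume.ae_ne s)]
    with r hr hrs
  calc ‖Φ₁ t * ↑(Φ₁ r)⁻¹ * Q * (A₂ r - A₁ r) * (Φ₂ r * ↑(Φ₂ s)⁻¹ * Q)‖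
      ≤ ‖(Φ₁ t * ↑(Φ₁ r)⁻¹ * Q : R)‖ * ‖A₂ r - A₁ r‖ * ‖(Φ₂ r * ↑(Φ₂ s)⁻¹ * Q : R)‖ :=
        norm_mul₃_le
    _ ≤ c₁ * ‖A₂ r - A₁ r‖ * c₂ := by
        gcongr
        exacts [mul_nonneg D₁.c_pos.le (norm_nonneg _), hb₁ r hr hrs, hb₂ r hr hrs]
    _ = c₁ * c₂ * ‖A₂ r - A₁ r‖ := mul_right_comm _ _ _

theorem norm_greenKernel_sub_le (D₁ : HasExpDichotomy A₁ Φ₁ P c₁ α₁)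
    (D₂ : HasExpDichotomy A₂ Φ₂ P c₂ α₂) (hA₁ : Continuous A₁) (hA₂ : Continuous A₂) (t s : ℝ) :
    ‖greenKernel Φ₂ P t s - greenKernel Φ₁ P t s‖ ≤
      c₁ * c₂ * |∫ r in s..t, ‖A₂ r - A₁ r‖| := by
  rcases le_or_gt s t with hst | hts
  · rw [greenKernel_of_le Φ₂ P hst, greenKernel_of_le Φ₁ P hst]
    refine norm_propagator_sub_le D₁ D₂ hA₁ hA₂ D₁.isIdempotentElem D₁.commute D₂.commute
      (fun r hr _ => ?_) (fun r hr _ => ?_) <;> rw [Set.uIoc_of_le hst] at hr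
    · simpa only [greenKernel_of_le Φ₁ P hr.2] using D₁.norm_greenKernel_le_const t r
    · simpa only [greenKernel_of_le Φ₂ P hr.1.le] using D₂.norm_greenKernel_le_const r s
  · rw [greenKernel_of_lt Φ₂ P hts, greenKernel_of_lt Φ₁ P hts, neg_sub_neg, norm_sub_rev]
    refine norm_propagator_sub_le D₁ D₂ hA₁ hA₂ D₁.isIdempotentElem.one_sub
      (fun t => (Commute.one_right _).sub_right (D₁.commute t))
      (fun t => (Commute.one_right _).sub_right (D₂.commute t))
      (fun r hr _ => ?_) (fun r hr hrs => ?_) <;> rw [Set.uIoc_of_ge hts.le] at hr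
    · simpa only [greenKernel_of_lt Φ₁ P hr.1, norm_neg] using D₁.norm_greenKernel_le_const t r
    · simpa only [greenKernel_of_lt Φ₂ P (hr.2.lt_of_ne hrs), norm_neg]
        using D₂.norm_greenKernel_le_const r s

theorem norm_greenKernel_translate_sub_le (D : HasExpDichotomy A Φ P c α) (hA : Continuous A)
    (a b t s : ℝ) :
    ‖greenKernel Φ P (t + b) (s + b) - greenKernel Φ P (t + a) (s + a)‖ ≤
      c * c * |∫ r in s..t, ‖A (r + b) - A (r + a)‖| := by
  simpa only [greenKernel, add_le_add_iff_right] using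
    norm_greenKernel_sub_le (D.comp_add_const a) (D.comp_add_const b)
      (hA.comp (continuous_add_const a)) (hA.comp (continuous_add_const b)) t s

end Perturbation

section LimitKernel

variable {C : ℝ} {σ : ℕ → ℝ} {A' : ℝ → R} {G' : ℝ → ℝ → R}

theorem exists_tendstoAlongDiagTranslates_greenKernel (D : HasExpDichotomy A Φ P c α)
    (hA : Continuous A) (hC : ∀ t, ‖A t‖ ≤ C) (hA' : TendstoAlongTranslates A σ A') :
    ∃ G', TendstoAlongDiagTranslates (greenKernel Φ P) σ G' := by
  have hcauchy (t s : ℝ) : CauchySeq fun n => greenKernel Φ P (t + σ n) (s + σ n) := by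
    have hlim := tendsto_abs_intervalIntegral_norm (l := atTop) (C := C + C)
      (B := fun q : ℕ × ℕ => fun r => A (r + σ q.1) - A (r + σ q.2)) (B' := fun _ => 0)
      (fun q => ((hA.comp (continuous_add_const _)).sub
        (hA.comp (continuous_add_const _))).aestronglyMeasurable)
      (fun q r => norm_sub_le_of_le (hC _) (hC _))
      (fun r => by
        rw [← prod_atTop_atTop_eq, ← sub_self (A' r)]
        exact ((hA' r).comp tendsto_fst).sub ((hA' r).comp tendsto_snd)) s t
    simp only [norm_zero, intervalIntegral.integral_zero, abs_zero] at hlim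
    refine cauchySeq_iff_tendsto_dist_atTop_0.2 <| squeeze_zero (fun _ => dist_nonneg)
      (fun q => ?_) (by simpa only [mul_zero] using hlim.const_mul (c * c))
    rw [dist_eq_norm]
    exact D.norm_greenKernel_translate_sub_le hA (σ q.2) (σ q.1) t s
  choose G' hG' using fun t s => cauchySeq_tendsto_of_complete (hcauchy t s)
  exact ⟨G', hG'⟩

theorem norm_limit_sub_greenKernel_le (D : HasExpDichotomy A Φ P c α)
    (hA : Continuous A) (hC : ∀ t, ‖A t‖ ≤ C) (hA' : TendstoAlongTranslates A σ A')
    (hG' : TendstoAlongDiagTranslates (greenKernel Φ P) σ G') (a t s : ℝ) :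
    ‖G' (t + a) (s + a) - greenKernel Φ P t s‖ ≤
      c * c * |∫ r in s..t, ‖A' (r + a) - A r‖| := by
  have hlim := tendsto_abs_intervalIntegral_norm (l := atTop) (C := C + C)
    (B := fun m r => A (r + a + σ m) - A r) (B' := fun r => A' (r + a) - A r)
    (fun m => (Continuous.sub (by fun_prop) hA).aestronglyMeasurable)
    (fun m r => norm_sub_le_of_le (hC _) (hC _)) (fun r => (hA' (r + a)).sub_const (A r)) s t
  refine le_of_tendsto_of_tendsto' ((hG' (t + a) (s + a)).sub_const _).norm
    (hlim.const_mul (c * c)) fun m => ?_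
  simpa only [add_zero, add_assoc] using D.norm_greenKernel_translate_sub_le hA 0 (a + σ m) t s

theorem tendstoAlongDiagTranslates_neg_greenKernel (D : HasExpDichotomy A Φ P c α)
    (hA : Continuous A) (hC : ∀ t, ‖A t‖ ≤ C) (hA' : AutomorphicAlong A σ A')
    (hG' : TendstoAlongDiagTranslates (greenKernel Φ P) σ G') :
    TendstoAlongDiagTranslates G' (-σ) (greenKernel Φ P) := by
  intro t s
  have hA'm : StronglyMeasurable A' :=
    stronglyMeasurable_of_tendsto atTop
      (fun n => (hA.comp (continuous_add_const (σ n))).stronglyMeasurable)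
      (tendsto_pi_nhds.2 hA'.1)
  have hA'C (r : ℝ) : ‖A' r‖ ≤ C := le_of_tendsto' (hA'.1 r).norm fun _ => hC _
  have hlim := tendsto_abs_intervalIntegral_norm (l := atTop) (C := C + C)
    (B := fun n r => A' (r + (-σ) n) - A r) (B' := fun _ => 0)
    (fun n => ((hA'm.comp_measurable (measurable_add_const _)).sub
      hA.stronglyMeasurable).aestronglyMeasurable)
    (fun n r => norm_sub_le_of_le (hA'C _) (hC _))
    (fun r => by simpa only [sub_self] using (hA'.2 r).sub_const (A r)) s t
  simp only [norm_zero, intervalIntegral.integral_zero, abs_zero] at hlim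
  exact tendsto_iff_norm_sub_tendsto_zero.2 <| squeeze_zero (fun _ => norm_nonneg _)
    (fun n => D.norm_limit_sub_greenKernel_le hA hC hA'.1 hG' _ t s)
    (by simpa only [mul_zero] using hlim.const_mul (c * c))

end LimitKernel

section GreenIntegral

variable {E : Type*} [NormedAddCommGroup E] [Module R E] [IsBoundedSMul R E]
  {h h₁ h₂ : ℝ → E} {H : ℝ}

theorem aestronglyMeasurable_greenKernel_smul (D : HasExpDichotomy A Φ P c α)
    (hh : Continuous h) (t : ℝ) : AEStronglyMeasurable fun s => greenKernel Φ P t s • h s := by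
  simp only [greenKernel, ite_smul]
  refine (StronglyMeasurable.ite measurableSet_Iic ?_ ?_).aestronglyMeasurable
  · exact (((D.continuous_inv.const_mul _).mul_const P).smul hh).stronglyMeasurable
  · exact (((D.continuous_inv.const_mul _).mul_const (1 - P)).neg.smul hh).stronglyMeasurable

theorem integrable_greenKernel_smul (D : HasExpDichotomy A Φ P c α) (hh : Continuous h)
    (hH : ∀ t, ‖h t‖ ≤ H) (t : ℝ) : Integrable fun s => greenKernel Φ P t s • h s :=
  (D.integrable_norm_bound H t).mono' (D.aestronglyMeasurable_greenKernel_smul hh t)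
    (Eventually.of_forall (D.norm_greenKernel_smul_le hH t))

variable [NormedSpace ℝ E]

theorem norm_greenIntegral_sub_le (D : HasExpDichotomy A Φ P c α) {H₁ H₂ : ℝ}
    (h₁c : Continuous h₁) (h₂c : Continuous h₂) (hH₁ : ∀ t, ‖h₁ t‖ ≤ H₁) (hH₂ : ∀ t, ‖h₂ t‖ ≤ H₂)
    (hH : ∀ t, ‖h₁ t - h₂ t‖ ≤ H) (t : ℝ) :
    ‖greenIntegral Φ P h₁ t - greenIntegral Φ P h₂ t‖ ≤ 2 * c / α * H := by
  rw [greenIntegral, greenIntegral, ← integral_sub (D.integrable_greenKernel_smul h₁c hH₁ t)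
    (D.integrable_greenKernel_smul h₂c hH₂ t)]
  simp only [← smul_sub]
  exact D.norm_greenIntegral_le hH t

variable [IsScalarTower ℝ R E]

theorem integrableOn_Iic_inv_mul_smul (D : HasExpDichotomy A Φ P c α) (hh : Continuous h)
    (hH : ∀ t, ‖h t‖ ≤ H) (t : ℝ) :
    IntegrableOn (fun s => (↑(Φ s)⁻¹ * P : R) • h s) (Set.Iic t) := by
  refine IntegrableOn.congr_fun ((ContinuousLinearMap.lsmul ℝ R (↑(Φ t)⁻¹ : R)).integrable_comp
    (D.integrable_greenKernel_smul hh hH t).integrableOn) (fun s hs => ?_) measurableSet_Iic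
  rw [ContinuousLinearMap.lsmul_apply, greenKernel_of_le Φ P hs, smul_smul, mul_assoc,
    Units.inv_mul_cancel_left]

theorem integrableOn_Ioi_inv_mul_smul (D : HasExpDichotomy A Φ P c α) (hh : Continuous h)
    (hH : ∀ t, ‖h t‖ ≤ H) (t : ℝ) :
    IntegrableOn (fun s => (↑(Φ s)⁻¹ * (1 - P) : R) • h s) (Set.Ioi t) := by
  refine IntegrableOn.congr_fun
    ((ContinuousLinearMap.lsmul ℝ R (-↑(Φ t)⁻¹ : R)).integrable_comp
      (D.integrable_greenKernel_smul hh hH t).integrableOn) (fun s hs => ?_) measurableSet_Ioi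
  rw [ContinuousLinearMap.lsmul_apply, greenKernel_of_lt Φ P hs, smul_smul, neg_mul_neg,
    mul_assoc, Units.inv_mul_cancel_left]

variable [CompleteSpace E]

theorem greenIntegral_eq_smul (D : HasExpDichotomy A Φ P c α) (hh : Continuous h)
    (hH : ∀ t, ‖h t‖ ≤ H) (t : ℝ) :
    greenIntegral Φ P h t = (Φ t : R) • ((∫ s in Set.Iic t, (↑(Φ s)⁻¹ * P : R) • h s) -
      ∫ s in Set.Ioi t, (↑(Φ s)⁻¹ * (1 - P) : R) • h s) := by
  have hG := D.integrable_greenKernel_smul hh hH t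
  have hIic := (ContinuousLinearMap.lsmul ℝ R (Φ t : R)).integral_comp_comm
    (D.integrableOn_Iic_inv_mul_smul hh hH t)
  have hIoi := (ContinuousLinearMap.lsmul ℝ R (Φ t : R)).integral_comp_comm
    (D.integrableOn_Ioi_inv_mul_smul hh hH t)
  simp only [ContinuousLinearMap.lsmul_apply, smul_smul, ← mul_assoc] at hIic hIoi
  rw [greenIntegral, ← intervalIntegral.integral_Iic_add_Ioi hG.integrableOn hG.integrableOn,
    smul_sub, ← hIic, ← hIoi, sub_eq_add_neg, ← integral_neg]
  refine congrArg₂ _ (setIntegral_congr_fun measurableSet_Iic fun s hs => ?_)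
    (setIntegral_congr_fun measurableSet_Ioi fun s hs => ?_)
  · exact congrArg (· • h s) (greenKernel_of_le Φ P hs)
  · exact (congrArg (· • h s) (greenKernel_of_lt Φ P hs)).trans (neg_smul _ _)

theorem hasDerivAt_greenIntegral (D : HasExpDichotomy A Φ P c α) (hh : Continuous h)
    (hH : ∀ t, ‖h t‖ ≤ H) (t : ℝ) :
    HasDerivAt (greenIntegral Φ P h) (A t • greenIntegral Φ P h t + h t) t := by
  have hw : HasDerivAt (fun t => (∫ s in Set.Iic t, (↑(Φ s)⁻¹ * P : R) • h s) -
      ∫ s in Set.Ioi t, (↑(Φ s)⁻¹ * (1 - P) : R) • h s) ((↑(Φ t)⁻¹ : R) • h t) t := by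
    refine ((hasDerivAt_setIntegral_Iic ((D.continuous_inv.mul_const P).smul hh)
      (D.integrableOn_Iic_inv_mul_smul hh hH) t).sub
      (hasDerivAt_setIntegral_Ioi ((D.continuous_inv.mul_const (1 - P)).smul hh)
        (D.integrableOn_Ioi_inv_mul_smul hh hH) t)).congr_deriv ?_
    simp only [Pi.smul_apply', sub_neg_eq_add, ← add_smul, ← mul_add, add_sub_cancel, mul_one]
  rw [funext (D.greenIntegral_eq_smul hh hH)]
  refine ((D.hasDerivAt t).fun_smul hw).congr_deriv ?_
  rw [smul_smul, Units.mul_inv, one_smul, mul_smul, add_comm]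

theorem almostAutomorphic_greenIntegral (D : HasExpDichotomy A Φ P c α)
    (hA : AlmostAutomorphic A) (hh : AlmostAutomorphic h) :
    AlmostAutomorphic (greenIntegral Φ P h) := by
  obtain ⟨C, hC⟩ := hA.exists_norm_le
  obtain ⟨H, hH⟩ := hh.exists_norm_le
  refine almostAutomorphic_iff.2 ⟨continuous_iff_continuousAt.2 fun t =>
    (D.hasDerivAt_greenIntegral hh.continuous hH t).continuousAt, fun σ => ?_⟩
  obtain ⟨k, hk, ψ', hψ'⟩ := (hA.prodMk hh).exists_automorphicAlong σ
  have hA' : AutomorphicAlong A (σ ∘ k) (Prod.fst ∘ ψ') := hψ'.continuous_comp continuous_fst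
  have hh' : AutomorphicAlong h (σ ∘ k) (Prod.snd ∘ ψ') := hψ'.continuous_comp continuous_snd
  obtain ⟨G', hG'⟩ :=
    D.exists_tendstoAlongDiagTranslates_greenKernel hA.continuous hC hA'.1
  have hG := D.tendstoAlongDiagTranslates_neg_greenKernel hA.continuous hC hA' hG'
  exact ⟨k, hk, _, automorphicAlong_integral (fun t s => (hG' t s).smul (hh'.1 s))
    (fun t s => (hG t s).smul (hh'.2 s))
    ((integrable_exp_neg_mul_abs D.α_pos).const_mul (c * H))
    (D.aestronglyMeasurable_greenKernel_smul hh.continuous) (D.norm_greenKernel_smul_le hH)⟩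

end GreenIntegral

section BoundedSolutions

variable {E : Type*} [NormedAddCommGroup E] [NormedSpace ℝ E] [Module R E] [IsBoundedSMul R E]
  [IsScalarTower ℝ R E] {z : ℝ → E} {Z : ℝ}

theorem propagator_smul_solution (D : HasExpDichotomy A Φ P c α)
    (hz : ∀ t, HasDerivAt z (A t • z t) t) (t s : ℝ) :
    (Φ t * ↑(Φ s)⁻¹ : R) • z s = z t := by
  have hderiv (r : ℝ) : HasDerivAt (fun r => (↑(Φ r)⁻¹ : R) • z r) 0 r := by
    refine ((D.hasDerivAt_inv r).fun_smul (hz r)).congr_deriv ?_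
    rw [neg_smul, mul_smul, add_neg_cancel]
  have hconst : (↑(Φ s)⁻¹ : R) • z s = (↑(Φ t)⁻¹ : R) • z t :=
    is_const_of_deriv_eq_zero (fun r => (hderiv r).differentiableAt)
      (fun r => (hderiv r).deriv) s t
  rw [mul_smul, hconst, smul_smul, Units.mul_inv, one_smul]

theorem eq_zero_of_bounded_solution (D : HasExpDichotomy A Φ P c α) (hZ : ∀ t, ‖z t‖ ≤ Z)
    (hz : ∀ t, HasDerivAt z (A t • z t) t) (t : ℝ) : z t = 0 := by
  have hstable : P • z t = 0 := by
    refine eq_zero_of_norm_le_mul_exp (C := c * Z) D.α_pos fun r hr => ?_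
    have hG := D.norm_greenKernel_smul_le hZ t (t - r)
    rwa [greenKernel_of_le Φ P (sub_le_self t hr.le), (D.commute_mul_inv _ _).eq, mul_smul,
      D.propagator_smul_solution hz, sub_sub_cancel, abs_of_pos hr] at hG
  have hunstable : (1 - P) • z t = 0 := by
    refine eq_zero_of_norm_le_mul_exp (C := c * Z) D.α_pos fun r hr => ?_
    have hG := D.norm_greenKernel_smul_le hZ t (t + r)
    rwa [greenKernel_of_lt Φ P (lt_add_of_pos_right t hr), neg_smul, norm_neg,
      ((Commute.one_right _).sub_right (D.commute_mul_inv _ _)).eq, mul_smul,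
      D.propagator_smul_solution hz, sub_add_cancel_left, abs_neg, abs_of_pos hr] at hG
  rw [← one_smul R (z t), ← add_sub_cancel P 1, add_smul, hstable, hunstable, add_zero]

theorem eq_greenIntegral_of_bounded_solution [CompleteSpace E] (D : HasExpDichotomy A Φ P c α)
    {h y : ℝ → E} {H Y : ℝ} (hh : Continuous h) (hH : ∀ t, ‖h t‖ ≤ H) (hY : ∀ t, ‖y t‖ ≤ Y)
    (hy : ∀ t, HasDerivAt y (A t • y t + h t) t) : y = greenIntegral Φ P h := by
  funext t
  refine sub_eq_zero.1 <| D.eq_zero_of_bounded_solution (z := fun t => y t - greenIntegral Φ P h t)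
    (fun t => norm_sub_le_of_le (hY t) (D.norm_greenIntegral_le hH t))
    (fun t => ((hy t).sub (D.hasDerivAt_greenIntegral hh hH t)).congr_deriv ?_) t
  rw [smul_sub, add_sub_add_right_eq_sub]

end BoundedSolutions

end HasExpDichotomy

end ExponentialDichotomy

section UniformContraction

open scoped UniformConvergence
open UniformFun

theorem existsUnique_fixedPoint_of_uniform_contraction {X E : Type*} [MetricSpace E]
    [CompleteSpace E] {S : Set (X → E)} {T : (X → E) → X → E} {K : NNReal} (hK : K < 1)
    (hne : S.Nonempty)
    (hclosed : ∀ (u : ℕ → X → E) (y : X → E), (∀ n, u n ∈ S) → TendstoUniformly u y atTop → y ∈ S)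
    (hbdd : ∀ y ∈ S, ∀ z ∈ S, ∃ d : ℝ, ∀ x, dist (y x) (z x) ≤ d) (hmaps : Set.MapsTo T S S)
    (hlip : ∀ y ∈ S, ∀ z ∈ S, ∀ d : ℝ, (∀ x, dist (y x) (z x) ≤ d) →
      ∀ x, dist (T y x) (T z x) ≤ K * d) :
    ∃! y, y ∈ S ∧ T y = y := by
  let T' : (X →ᵤ E) → X →ᵤ E := fun y => ofFun (T (toFun y))
  let S' : Set (X →ᵤ E) := toFun ⁻¹' S
  have hS' : IsSeqClosed S' := fun u y hu huy =>
    hclosed _ _ hu (UniformFun.tendsto_iff_tendstoUniformly.1 huy)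
  have hT' : Set.MapsTo T' S' S' := fun y hy => hmaps hy
  have hfinite (y) (hy : y ∈ S') (z) (hz : z ∈ S') : edist y z ≠ ⊤ := by
    obtain ⟨d, hd⟩ := hbdd _ hy _ hz
    refine ne_top_of_le_ne_top (ENNReal.ofReal_ne_top (r := d)) (edist_le.2 fun x => ?_)
    rw [edist_dist]
    exact ENNReal.ofReal_le_ofReal (hd x)
  have hcontr : ContractingWith K (hT'.restrict T' S' S') := by
    refine ⟨hK, fun y z => edist_le.2 fun x => ?_⟩
    have hd (x : X) : dist (toFun y.1 x) (toFun z.1 x) ≤ (edist y.1 z.1).toReal := by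
      rw [dist_edist]
      exact ENNReal.toReal_mono (hfinite _ y.2 _ z.2) edist_eval_le
    have hTd := ENNReal.ofReal_le_ofReal (hlip _ y.2 _ z.2 _ hd x)
    rwa [← edist_dist, ENNReal.ofReal_mul K.coe_nonneg, ENNReal.ofReal_coe_nnreal,
      ENNReal.ofReal_toReal (hfinite _ y.2 _ z.2)] at hTd
  obtain ⟨w, hw⟩ := hne
  obtain ⟨y, hyS, hy, -⟩ :=
    ContractingWith.exists_fixedPoint' hS'.isClosed.isComplete hT' hcontr (x := ofFun w) hw
      (hfinite _ hw _ (hT' hw))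
  refine ⟨toFun y, ⟨hyS, hy⟩, fun z ⟨hzS, hz⟩ => ?_⟩
  have hyz := hcontr.eq_or_edist_eq_top_of_fixedPoints (x := ⟨ofFun z, hzS⟩) (y := ⟨y, hyS⟩)
    (Subtype.ext hz) (Subtype.ext hy)
  exact congrArg Subtype.val (hyz.resolve_right (hfinite _ hzS _ hyS))

end UniformContraction

section DelayedEquation

variable {E : Type*} [NormedAddCommGroup E]

/-- The tube of radius `ρ` around `φ` in the space of almost automorphic functions, on which the
fixed point problem is posed. -/
def almostAutomorphicTube (φ : ℝ → E) (ρ : ℝ) : Set (ℝ → E) :=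
  {y | AlmostAutomorphic y ∧ ∀ t, ‖y t - φ t‖ ≤ ρ}

/-- The inhomogeneity `f(t) + g(t, y(t - τ))` of the delayed equation, evaluated along `y`. -/
def delayedForcing (f : ℝ → E) (g : ℝ → E → E) (τ : ℝ) (y : ℝ → E) (t : ℝ) : E :=
  f t + g t (y (t - τ))

variable {φ f y z : ℝ → E} {g : ℝ → E → E} {τ ρ L : ℝ}

theorem mem_almostAutomorphicTube_of_tendstoUniformly [CompleteSpace E] {u : ℕ → ℝ → E}
    (hu : ∀ n, u n ∈ almostAutomorphicTube φ ρ) (hy : TendstoUniformly u y atTop) :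
    y ∈ almostAutomorphicTube φ ρ :=
  ⟨.of_tendstoUniformly (fun n => (hu n).1) hy, fun t =>
    le_of_tendsto' ((hy.tendsto_at t).sub_const (φ t)).norm fun n => (hu n).2 t⟩

theorem norm_le_of_mem_almostAutomorphicTube (hφ : ∀ t, ‖φ t‖ ≤ ρ)
    (hy : y ∈ almostAutomorphicTube φ ρ) (t : ℝ) : ‖y t‖ ≤ 2 * ρ := by
  linarith [norm_sub_norm_le (y t) (φ t), hy.2 t, hφ t]

theorem zero_mem_almostAutomorphicTube (hφ : ∀ t, ‖φ t‖ ≤ ρ) :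
    0 ∈ almostAutomorphicTube φ ρ :=
  ⟨.zero, fun t => by simpa only [Pi.zero_apply, zero_sub, norm_neg] using hφ t⟩

theorem delayedForcing_zero (f : ℝ → E) (hg0 : ∀ t, g t 0 = 0) (τ : ℝ) :
    delayedForcing f g τ 0 = f := by
  funext t
  rw [delayedForcing, Pi.zero_apply, hg0, add_zero]

theorem almostAutomorphic_delayedForcing (hf : AlmostAutomorphic f)
    (hgc : Continuous fun q : ℝ × E => g q.1 q.2) (hg : AlmostAutomorphicUniform g)
    (hy : AlmostAutomorphic y) (τ : ℝ) : AlmostAutomorphic (delayedForcing f g τ y) :=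
  hf.add (AlmostAutomorphicUniform.comp hgc hg (hy.comp_sub_const τ))

theorem norm_delayedForcing_sub_le (hL : 0 ≤ L)
    (hlip : ∀ t y₁ y₂, ‖y₁ - φ (t - τ)‖ ≤ ρ → ‖y₂ - φ (t - τ)‖ ≤ ρ →
      ‖g t y₁ - g t y₂‖ ≤ L * ‖y₁ - y₂‖)
    (hy : ∀ t, ‖y t - φ t‖ ≤ ρ) (hz : ∀ t, ‖z t - φ t‖ ≤ ρ) {d : ℝ}
    (hd : ∀ t, ‖y t - z t‖ ≤ d) (t : ℝ) :
    ‖delayedForcing f g τ y t - delayedForcing f g τ z t‖ ≤ L * d := by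
  rw [delayedForcing, delayedForcing, add_sub_add_left_eq_sub]
  exact (hlip t _ _ (hy _) (hz _)).trans (mul_le_mul_of_nonneg_left (hd _) hL)

variable {R : Type*} [NormedRing R] [NormedAlgebra ℝ R] [CompleteSpace R]
  [NormedSpace ℝ E] [Module R E] [IsBoundedSMul R E]
  {A : ℝ → R} {Φ : ℝ → Rˣ} {P : R} {c α : ℝ}

namespace HasExpDichotomy

theorem norm_greenIntegral_delayedForcing_sub_le (D : HasExpDichotomy A Φ P c α)
    (hf : AlmostAutomorphic f) (hgc : Continuous fun q : ℝ × E => g q.1 q.2)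
    (hg : AlmostAutomorphicUniform g) (hL : 0 ≤ L)
    (hlip : ∀ t y₁ y₂, ‖y₁ - φ (t - τ)‖ ≤ ρ → ‖y₂ - φ (t - τ)‖ ≤ ρ →
      ‖g t y₁ - g t y₂‖ ≤ L * ‖y₁ - y₂‖)
    (hLα : 4 * c * L ≤ α) (hy : y ∈ almostAutomorphicTube φ ρ)
    (hz : z ∈ almostAutomorphicTube φ ρ) {d : ℝ} (hd : ∀ t, ‖y t - z t‖ ≤ d) (t : ℝ) :
    ‖greenIntegral Φ P (delayedForcing f g τ y) t -
      greenIntegral Φ P (delayedForcing f g τ z) t‖ ≤ 1 / 2 * d := by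
  have hFy := almostAutomorphic_delayedForcing hf hgc hg hy.1 τ
  have hFz := almostAutomorphic_delayedForcing hf hgc hg hz.1 τ
  obtain ⟨Hy, hHy⟩ := hFy.exists_norm_le
  obtain ⟨Hz, hHz⟩ := hFz.exists_norm_le
  have hconst : 2 * c / α * L ≤ 1 / 2 := by
    rw [div_mul_eq_mul_div, div_le_iff₀ D.α_pos]
    linarith
  calc ‖greenIntegral Φ P (delayedForcing f g τ y) t -
        greenIntegral Φ P (delayedForcing f g τ z) t‖
      ≤ 2 * c / α * (L * d) :=
        D.norm_greenIntegral_sub_le hFy.continuous hFz.continuous hHy hHz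
          (norm_delayedForcing_sub_le hL hlip hy.2 hz.2 hd) t
    _ = 2 * c / α * L * d := (mul_assoc _ _ _).symm
    _ ≤ 1 / 2 * d := mul_le_mul_of_nonneg_right hconst ((norm_nonneg _).trans (hd t))

variable [IsScalarTower ℝ R E] [CompleteSpace E]

theorem greenIntegral_eq_iff (D : HasExpDichotomy A Φ P c α) {h : ℝ → E} {H Y : ℝ}
    (hh : Continuous h) (hH : ∀ t, ‖h t‖ ≤ H) (hY : ∀ t, ‖y t‖ ≤ Y) :
    greenIntegral Φ P h = y ↔ ∀ t, HasDerivAt y (A t • y t + h t) t := by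
  refine ⟨?_, fun hy => (D.eq_greenIntegral_of_bounded_solution hh hH hY hy).symm⟩
  rintro rfl
  exact D.hasDerivAt_greenIntegral hh hH

theorem mapsTo_greenIntegral_delayedForcing (D : HasExpDichotomy A Φ P c α)
    (hA : AlmostAutomorphic A) (hf : AlmostAutomorphic f)
    (hφ : ∀ t, ‖greenIntegral Φ P f t‖ ≤ ρ)
    (hgc : Continuous fun q : ℝ × E => g q.1 q.2) (hg0 : ∀ t, g t 0 = 0)
    (hg : AlmostAutomorphicUniform g) (hL : 0 ≤ L)
    (hlip : ∀ t y₁ y₂, ‖y₁ - greenIntegral Φ P f (t - τ)‖ ≤ ρ →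
      ‖y₂ - greenIntegral Φ P f (t - τ)‖ ≤ ρ → ‖g t y₁ - g t y₂‖ ≤ L * ‖y₁ - y₂‖)
    (hLα : 4 * c * L ≤ α) :
    Set.MapsTo (fun y => greenIntegral Φ P (delayedForcing f g τ y))
      (almostAutomorphicTube (greenIntegral Φ P f) ρ)
      (almostAutomorphicTube (greenIntegral Φ P f) ρ) := by
  intro y hy
  refine ⟨D.almostAutomorphic_greenIntegral hA
    (almostAutomorphic_delayedForcing hf hgc hg hy.1 τ), fun t => ?_⟩
  have hy0 (t : ℝ) : ‖y t - (0 : ℝ → E) t‖ ≤ 2 * ρ := by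
    rw [Pi.zero_apply, sub_zero]
    exact norm_le_of_mem_almostAutomorphicTube hφ hy t
  have hsub := D.norm_greenIntegral_delayedForcing_sub_le hf hgc hg hL hlip hLα hy
    (zero_mem_almostAutomorphicTube hφ) hy0 t
  rwa [delayedForcing_zero f hg0, ← mul_assoc, one_div_mul_cancel two_ne_zero, one_mul] at hsub

theorem existsUnique_greenIntegral_delayedForcing_eq (D : HasExpDichotomy A Φ P c α)
    (hA : AlmostAutomorphic A) (hf : AlmostAutomorphic f)
    (hφ : ∀ t, ‖greenIntegral Φ P f t‖ ≤ ρ)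
    (hgc : Continuous fun q : ℝ × E => g q.1 q.2) (hg0 : ∀ t, g t 0 = 0)
    (hg : AlmostAutomorphicUniform g) (hL : 0 ≤ L)
    (hlip : ∀ t y₁ y₂, ‖y₁ - greenIntegral Φ P f (t - τ)‖ ≤ ρ →
      ‖y₂ - greenIntegral Φ P f (t - τ)‖ ≤ ρ → ‖g t y₁ - g t y₂‖ ≤ L * ‖y₁ - y₂‖)
    (hLα : 4 * c * L ≤ α) :
    ∃! y, y ∈ almostAutomorphicTube (greenIntegral Φ P f) ρ ∧
      greenIntegral Φ P (delayedForcing f g τ y) = y := by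
  refine existsUnique_fixedPoint_of_uniform_contraction
    (T := fun y => greenIntegral Φ P (delayedForcing f g τ y)) (K := 1 / 2)
    (half_lt_self one_pos) ⟨0, zero_mem_almostAutomorphicTube hφ⟩
    (fun u y hu hy => mem_almostAutomorphicTube_of_tendstoUniformly hu hy)
    (fun y hy z hz => ⟨2 * ρ + 2 * ρ, fun t => ?_⟩)
    (D.mapsTo_greenIntegral_delayedForcing hA hf hφ hgc hg0 hg hL hlip hLα)
    (fun y hy z hz d hd t => ?_)
  · exact (dist_le_norm_add_norm _ _).trans <| add_le_add
      (norm_le_of_mem_almostAutomorphicTube hφ hy t)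
      (norm_le_of_mem_almostAutomorphicTube hφ hz t)
  · simp only [dist_eq_norm, NNReal.coe_div, NNReal.coe_one, NNReal.coe_ofNat] at hd ⊢
    exact D.norm_greenIntegral_delayedForcing_sub_le hf hgc hg hL hlip hLα hy hz hd t

end HasExpDichotomy

end DelayedEquation

theorem delayed_nonlinear_matrix_equation_unique_almost_automorphic_solution_general
    {R E : Type*} [NormedRing R] [NormedAlgebra ℝ R] [CompleteSpace R] [NormedAddCommGroup E]
    [NormedSpace ℝ E] [CompleteSpace E] [Module R E] [IsBoundedSMul R E] [IsScalarTower ℝ R E]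
    {A : ℝ → R} {Φ : ℝ → Rˣ} {P : R} {c α ρ L : ℝ} {f : ℝ → E} {g : ℝ → E → E}
    (τ : ℝ) (hA : AlmostAutomorphic A) (D : HasExpDichotomy A Φ P c α)
    (hf : AlmostAutomorphic f) (hfb : ∀ t, ‖f t‖ ≤ α * ρ / (2 * c))
    (hgc : Continuous fun q : ℝ × E => g q.1 q.2) (hg0 : ∀ t, g t 0 = 0)
    (hg : AlmostAutomorphicUniform g) (hL : 0 ≤ L)
    (hlip : ∀ t y₁ y₂, ‖y₁ - greenIntegral Φ P f (t - τ)‖ ≤ ρ →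
      ‖y₂ - greenIntegral Φ P f (t - τ)‖ ≤ ρ → ‖g t y₁ - g t y₂‖ ≤ L * ‖y₁ - y₂‖)
    (hLα : 4 * c * L ≤ α) :
    ∃! y : ℝ → E, AlmostAutomorphic y ∧ (∀ t, ‖y t - greenIntegral Φ P f t‖ ≤ ρ) ∧
      ∀ t, HasDerivAt y (A t • y t + f t + g t (y (t - τ))) t := by
  have hφ (t : ℝ) : ‖greenIntegral Φ P f t‖ ≤ ρ := by
    refine (D.norm_greenIntegral_le hfb t).trans_eq ?_
    have := D.c_pos.ne'
    have := D.α_pos.ne'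
    field_simp
  refine (existsUnique_congr fun y => ?_).1
    (D.existsUnique_greenIntegral_delayedForcing_eq hA hf hφ hgc hg0 hg hL hlip hLα)
  rw [← and_assoc]
  refine and_congr_right fun hy => ?_
  have hF := almostAutomorphic_delayedForcing hf hgc hg hy.1 τ
  obtain ⟨H, hH⟩ := hF.exists_norm_le
  simpa only [delayedForcing, ← add_assoc] using
    D.greenIntegral_eq_iff hF.continuous hH (norm_le_of_mem_almostAutomorphicTube hφ hy)

section MatrixSystems

open scoped Matrix.Module

instance isBoundedSMul_matrix_pi {𝕜 V n : Type*} [NormedRing 𝕜] [NormedAddCommGroup V]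
    [Module 𝕜 V] [IsBoundedSMul 𝕜 V] [Fintype n] [DecidableEq n] :
    IsBoundedSMul (Matrix n n 𝕜) (n → V) := by
  refine IsBoundedSMul.of_norm_smul_le fun M v =>
    (pi_norm_le_iff_of_nonneg (mul_nonneg (norm_nonneg M) (norm_nonneg v))).2 fun i => ?_
  have hrow : ∑ j, ‖M i j‖ ≤ ‖M‖ := by
    have hrow := Finset.le_sup (f := fun i => ∑ j, ‖M i j‖₊) (Finset.mem_univ i)
    rw [← Matrix.linfty_opNNNorm_def] at hrow
    exact (NNReal.coe_sum _ _).symm.trans_le (NNReal.coe_le_coe.2 hrow)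
  calc ‖∑ j, M i j • v j‖
      ≤ ∑ j, ‖M i j‖ * ‖v‖ := norm_sum_le_of_le _ fun j _ =>
        (norm_smul_le _ _).trans (mul_le_mul_of_nonneg_left (norm_le_pi_norm v j) (norm_nonneg _))
    _ ≤ ‖M‖ * ‖v‖ := by
        rw [← Finset.sum_mul]
        exact mul_le_mul_of_nonneg_right hrow (norm_nonneg v)

variable {p : ℕ}

theorem greenKernel_unit {Φ : ℝ → Matrix (Fin p) (Fin p) ℂ} (hΦ : ∀ t, IsUnit (Φ t))
    (P : Matrix (Fin p) (Fin p) ℂ) (t s : ℝ) :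
    greenKernel (fun t => (hΦ t).unit) P t s = GreenMat Φ P t s := by
  simp only [greenKernel, GreenMat, Matrix.coe_units_inv, IsUnit.unit_spec]

theorem greenIntegral_unit {V : Type*} [NormedAddCommGroup V] [NormedSpace ℂ V] [CompleteSpace V]
    {Φ : ℝ → Matrix (Fin p) (Fin p) ℂ}
    (hΦ : ∀ t, IsUnit (Φ t)) (P : Matrix (Fin p) (Fin p) ℂ) (f : ℝ → Fin p → V) :
    greenIntegral (fun t => (hΦ t).unit) P f = greenSol Φ P f := by
  funext t
  simp only [greenIntegral, greenKernel_unit]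
  rfl

theorem hasExpDichotomy_of_isFundamentalMatrix {A Φ : ℝ → Matrix (Fin p) (Fin p) ℂ}
    {P : Matrix (Fin p) (Fin p) ℂ} {c α : ℝ} (hΦ : IsFundamentalMatrix A Φ) (hP : P * P = P)
    (hcomm : ∀ t, Φ t * P = P * Φ t) (hc : 0 < c) (hα : 0 < α)
    (hdich : ∀ t s, ‖GreenMat Φ P t s‖ ≤ c * Real.exp (-α * |t - s|)) :
    HasExpDichotomy A (fun t => (hΦ.2 t).unit) P c α where
  hasDerivAt := hΦ.1
  isIdempotentElem := hP
  commute := hcomm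
  c_pos := hc
  α_pos := hα
  norm_greenKernel_le t s := by
    rw [greenKernel_unit]
    exact hdich t s

theorem almostAutomorphic_matrix {A : ℝ → Matrix (Fin p) (Fin p) ℂ}
    (hA : ∀ i j, AlmostAutomorphic fun t => A t i j) : AlmostAutomorphic A :=
  AlmostAutomorphic.pi fun i => AlmostAutomorphic.pi fun j => hA i j

end MatrixSystems

theorem delayed_nonlinear_matrix_equation_unique_almost_automorphic_solution
    {V : Type*} [NormedAddCommGroup V] [NormedSpace ℂ V] [CompleteSpace V] {p : ℕ}
    (τ : ℝ) (hτ : 0 ≤ τ)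
    (A ΦA : ℝ → Matrix (Fin p) (Fin p) ℂ)
    (hAc : Continuous A) (hAb : ∃ C, ∀ t, ‖A t‖ ≤ C)
    (hAaa : ∀ i j : Fin p, AlmostAutomorphic (fun t => A t i j))
    (hΦA : IsFundamentalMatrix A ΦA)
    (P : Matrix (Fin p) (Fin p) ℂ) (hP : P * P = P)
    (hPcomm : ∀ t : ℝ, ΦA t * P = P * ΦA t)
    (c α : ℝ) (hc : 0 < c) (hα : 0 < α)
    (hdich : ∀ t s : ℝ, ‖GreenMat ΦA P t s‖ ≤ c * Real.exp (-α * |t - s|))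
    (ρ : ℝ) (hρ : 0 < ρ)
    (f : ℝ → (Fin p → V)) (hfc : Continuous f) (hfaa : AlmostAutomorphic f)
    (hfb : ∀ t : ℝ, ‖f t‖ ≤ α * ρ / (2 * c))
    (g : ℝ → (Fin p → V) → (Fin p → V))
    (hgc : Continuous fun q : ℝ × (Fin p → V) => g q.1 q.2)
    (hg0 : ∀ t : ℝ, g t 0 = 0)
    (hgaa : AlmostAutomorphicUniform g)
    (L : ℝ) (hL : 0 < L)
    (hglip : ∀ (t : ℝ) (y₁ y₂ : Fin p → V),
      ‖y₁ - greenSol ΦA P f (t - τ)‖ ≤ ρ → ‖y₂ - greenSol ΦA P f (t - τ)‖ ≤ ρ →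
      ‖g t y₁ - g t y₂‖ ≤ L * ‖y₁ - y₂‖)
    (hLα : 4 * c * L < α) :
    ∃! y : ℝ → (Fin p → V),
      AlmostAutomorphic y ∧
      (∀ t : ℝ, ‖y t - greenSol ΦA P f t‖ ≤ ρ) ∧
      (∀ (t : ℝ) (i : Fin p),
        HasDerivAt (fun t => y t i)
          ((∑ j : Fin p, A t i j • y t j) + f t i + g t (y (t - τ)) i) t) := by
  open scoped Matrix.Module in
  simpa only [greenIntegral_unit, hasDerivAt_pi, Pi.add_apply,
    Matrix.Module.smul_apply] using
    delayed_nonlinear_matrix_equation_unique_almost_automorphic_solution_general τ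
      (almostAutomorphic_matrix hAaa)
      (hasExpDichotomy_of_isFundamentalMatrix hΦA hP hPcomm hc hα hdich) hfaa hfb hgc hg0 hgaa
      hL.le (by simpa only [greenIntegral_unit] using hglip) hLα.le
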